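/- arXiv:1501.07895 — 5 statements merged into one kernel-verified Lean document; each statement's English description precedes it below -/
import Mathlib

section
/- Let W be a Delsarte polynomial in n variables with exponent matrix A invertible over ℚ and charges q = A^{-1}𝟙. The map that sends the class of v = (v_1,…,v_n) ∈ ℚ^n to diag(e^{2πiv_1},…,e^{2πiv_n}) induces a group isomorphism from {v ∈ ℚ^n/ℤ^n : Av ∈ ℤ^n} (equivalently A^{-1}ℤ^n/ℤ^n) onto Aut(W). Under this isomorphism the class of q maps to j_W, and the image of a class v lies in SL(W) if and only if v_1 + ⋯ + v_n ∈ ℤ. -/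
open Complex BigOperators Matrix

noncomputable section

namespace BV

/-- The Delsarte polynomial function attached to an exponent matrix `A`. -/
def wfun {ι : Type*} [Fintype ι] (A : Matrix ι ι ℕ) (x : ι → ℂ) : ℂ :=
  ∑ i, ∏ j, x j ^ A i j

/-- The group `Aut(P)` of diagonal symmetries of a function `P : (ι → ℂ) → ℂ`. -/
def autP {ι : Type*} (P : (ι → ℂ) → ℂ) : Subgroup (ι → ℂˣ) where
  carrier := {lam | ∀ x : ι → ℂ, P (fun j => (lam j : ℂ) * x j) = P x}
  one_mem' := by intro x; simp
  mul_mem' := by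
    intro a b ha hb x
    have h1 := ha fun j => (b j : ℂ) * x j
    have h2 := hb x
    have h3 : (fun j => ((a * b) j : ℂ) * x j) = fun j => (a j : ℂ) * ((b j : ℂ) * x j) := by
      funext j; simp [mul_assoc]
    rw [h3, h1, h2]
  inv_mem' := by
    intro a ha x
    have h := (ha fun j => (((a j)⁻¹ : ℂˣ) : ℂ) * x j).symm
    have h2 : (fun j => (a j : ℂ) * ((((a j)⁻¹ : ℂˣ) : ℂ) * x j)) = x := by
      funext j; exact Units.mul_inv_cancel_left (a j) (x j)
    rw [h2] at h
    simpa using h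

/-- The product-of-entries homomorphism (the determinant of a diagonal matrix). -/
def prodHom (ι : Type*) [Fintype ι] : (ι → ℂˣ) →* ℂˣ where
  toFun lam := ∏ j, lam j
  map_one' := by simp
  map_mul' a b := by simp [Finset.prod_mul_distrib]

/-- The group `SL(P)` of diagonal symmetries of determinant one. -/
def slP {ι : Type*} [Fintype ι] (P : (ι → ℂ) → ℂ) : Subgroup (ι → ℂˣ) :=
  autP P ⊓ (prodHom ι).ker

/-- `exp(2 π i v)` as a unit of `ℂ`. -/
def eU (v : ℚ) : ℂˣ := Units.mk0 (Complex.exp (2 * (Real.pi : ℂ) * Complex.I * (v : ℂ)))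
  (Complex.exp_ne_zero _)

/-- The element `j_W` attached to a charge vector `q`. -/
def jW {ι : Type*} (q : ι → ℚ) : ι → ℂˣ := fun j => eU (q j)

/-- The group `J_W = ⟨j_W⟩`. -/
def JW {ι : Type*} (q : ι → ℚ) : Subgroup (ι → ℂˣ) := Subgroup.zpowers (jW q)

end BV

/-!
A diagonal matrix `g` preserves a sum of monomials iff it preserves each of them: monomials are
characters of the multiplicative monoid `ℂⁿ`, distinct characters are linearly independent, and
repeated ones only contribute positive integer multiplicities. For `g = diag(e^{2πiv_j})` this
means `Av ∈ ℤⁿ`. Moreover, applying the adjugate of `A` to the equations saying that `g` preserves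
every monomial gives `g_j ^ det A = 1`, so each entry of `g` is a root of unity, that is, of the
form `e^{2πiv_j}` with `v_j ∈ ℚ`.
-/

section Characters

open Finset

variable {κ M L : Type*} [Fintype κ] [Monoid M] [CommRing L] [IsDomain L] [CharZero L]

lemma forall_sum_monoidHom_mul_eq_iff (χ : κ → M →* L) (g : M) :
    (∀ x, ∑ i, χ i (g * x) = ∑ i, χ i x) ↔ ∀ i, χ i g = 1 := by
  classical
  refine ⟨fun h i ↦ ?_, fun h x ↦ by simp [h]⟩
  let mult (φ : M →* L) : ℕ := #{i | χ i = φ}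
  have relation : ∑ φ ∈ univ.image χ, (mult φ • (φ g - 1)) • (φ : M → L) = 0 := by
    funext x
    calc (∑ φ ∈ univ.image χ, (mult φ • (φ g - 1)) • (φ : M → L)) x
        = ∑ φ ∈ univ.image χ, mult φ • ((φ g - 1) * φ x) := by
          simp only [Finset.sum_apply, Pi.smul_apply, smul_eq_mul, smul_mul_assoc]
      _ = ∑ i, (χ i g - 1) * χ i x := (sum_comp (fun φ : M →* L ↦ (φ g - 1) * φ x) χ).symm
      _ = ∑ i, χ i (g * x) - ∑ i, χ i x := by simp only [sub_mul, one_mul, sum_sub_distrib, map_mul]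
      _ = 0 := sub_eq_zero.2 (h x)
  have coeff_eq_zero : mult (χ i) • (χ i g - 1) = 0 :=
    linearIndependent_iff'.1 (linearIndependent_monoidHom M L) _ _ relation _
      (mem_image_of_mem χ (mem_univ i))
  have mult_ne_zero : mult (χ i) ≠ 0 := card_ne_zero_of_mem (a := i) (by simp)
  exact sub_eq_zero.1 ((smul_eq_zero.1 coeff_eq_zero).resolve_left mult_ne_zero)

end Characters

section Determinant

open scoped Matrix.Module

variable {ι : Type*} [Fintype ι] [DecidableEq ι]

lemma det_smul_eq_zero_of_smul_eq_zero {R M : Type*} [CommRing R] [AddCommGroup M] [Module R M]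
    {A : Matrix ι ι R} {m : ι → M} (h : A • m = 0) : A.det • m = 0 :=
  calc A.det • m = (A.adjugate * A) • m := by rw [adjugate_mul, smul_assoc, one_smul]
    _ = 0 := by rw [mul_smul, h, smul_zero]

lemma zpow_det_eq_one {G : Type*} [CommGroup G] {A : Matrix ι ι ℤ} {g : ι → G}
    (h : ∀ i, ∏ j, g j ^ A i j = 1) (j : ι) : g j ^ A.det = 1 := by
  have h_add : A • (fun i ↦ Additive.ofMul (g i)) = 0 := funext h
  exact congrFun (det_smul_eq_zero_of_smul_eq_zero h_add) j

end Determinant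

namespace BV

section Exponential

lemma eU_add (v w : ℚ) : eU (v + w) = eU v * eU w := by
  ext
  simp [eU, mul_add, Complex.exp_add]

lemma eU_eq_one_iff (v : ℚ) : eU v = 1 ↔ ∃ k : ℤ, v = k := by
  rw [← Units.val_inj, eU, Units.val_mk0, Units.val_one, Complex.exp_eq_one_iff]
  refine exists_congr fun k ↦ ?_
  rw [mul_comm, mul_left_inj' two_pi_I_ne_zero]
  norm_cast

lemma exists_eU_eq_of_isOfFinOrder {u : ℂˣ} (hu : IsOfFinOrder u) : ∃ v, eU v = u := by
  have : NeZero (orderOf u) := ⟨hu.orderOf_pos.ne'⟩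
  obtain ⟨i, -, hi⟩ := (Complex.mem_rootsOfUnity (orderOf u) u).1 (pow_orderOf_eq_one u)
  exact ⟨i / orderOf u, Units.ext (by simpa [eU] using hi)⟩

lemma eU_natCast_mul (n : ℕ) (v : ℚ) : eU (n * v) = eU v ^ n := by
  ext
  simp [eU, ← Complex.exp_nat_mul, mul_left_comm]

lemma prod_eU {ι : Type*} [Fintype ι] (v : ι → ℚ) : ∏ j, eU (v j) = eU (∑ j, v j) := by
  ext
  simp [eU, Finset.mul_sum, Complex.exp_sum]

lemma prod_eU_pow {ι : Type*} [Fintype ι] (a : ι → ℕ) (v : ι → ℚ) :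
    ∏ j, eU (v j) ^ a j = eU (∑ j, a j * v j) := by
  simp only [← prod_eU, eU_natCast_mul]

lemma jW_eq_one_iff {ι : Type*} (v : ι → ℚ) : jW v = 1 ↔ ∀ j, ∃ k : ℤ, v j = k :=
  funext_iff.trans (forall_congr' fun j ↦ eU_eq_one_iff (v j))

end Exponential

section Aut

variable {ι : Type*} [Fintype ι]

/-- The monomial function `x ↦ ∏ j, x j ^ a j`, as a character of the multiplicative monoid
`ι → R`. -/
def monomialHom {R : Type*} [CommMonoid R] (a : ι → ℕ) : (ι → R) →* R :=
  ∏ j, Pi.evalMonoidHom _ j ^ a j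

lemma monomialHom_apply {R : Type*} [CommMonoid R] (a : ι → ℕ) (x : ι → R) :
    monomialHom a x = ∏ j, x j ^ a j := by
  simp [monomialHom]

lemma mem_autP_wfun_iff (A : Matrix ι ι ℕ) (g : ι → ℂˣ) :
    g ∈ autP (wfun A) ↔ ∀ i, ∏ j, g j ^ A i j = 1 := by
  have h := forall_sum_monoidHom_mul_eq_iff (fun i ↦ monomialHom (A i)) (fun j ↦ (g j : ℂ))
  simp only [monomialHom_apply] at h
  refine h.trans (forall_congr' fun i ↦ ?_)
  rw [← Units.val_inj]
  push_cast
  rfl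

lemma jW_mem_autP_iff (A : Matrix ι ι ℕ) (v : ι → ℚ) :
    jW v ∈ autP (wfun A) ↔ ∀ i, ∃ k : ℤ, (A.map (Nat.cast : ℕ → ℚ) *ᵥ v) i = k := by
  rw [mem_autP_wfun_iff]
  refine forall_congr' fun i ↦ ?_
  rw [← eU_eq_one_iff]
  exact Eq.congr_left (prod_eU_pow (A i) v)

lemma jW_mem_ker_prodHom_iff (v : ι → ℚ) :
    jW v ∈ (prodHom ι).ker ↔ ∃ k : ℤ, ∑ j, v j = k := by
  rw [← eU_eq_one_iff, ← prod_eU]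
  rfl

variable [DecidableEq ι] {A : Matrix ι ι ℕ}

lemma isOfFinOrder_of_mem_autP_wfun (hA : IsUnit (A.map (Nat.cast : ℕ → ℚ)).det) {g : ι → ℂˣ}
    (hg : g ∈ autP (wfun A)) (j : ι) : IsOfFinOrder (g j) := by
  let B : Matrix ι ι ℤ := A.map Nat.cast
  have det_cast : (B.det : ℚ) = (A.map (Nat.cast : ℕ → ℚ)).det := by
    simp [B, Int.cast_det, Matrix.map_map, Function.comp_def]
  have hB : B.det ≠ 0 := by exact_mod_cast det_cast ▸ hA.ne_zero
  have hpow : g j ^ B.det = 1 :=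
    zpow_det_eq_one (by simpa [B] using (mem_autP_wfun_iff A g).1 hg) j
  exact isOfFinOrder_iff_zpow_eq_one.2 ⟨B.det, hB, hpow⟩

lemma exists_jW_eq_of_mem_autP_wfun (hA : IsUnit (A.map (Nat.cast : ℕ → ℚ)).det) {g : ι → ℂˣ}
    (hg : g ∈ autP (wfun A)) : ∃ v, jW v = g := by
  choose v hv using fun j ↦ exists_eU_eq_of_isOfFinOrder (isOfFinOrder_of_mem_autP_wfun hA hg j)
  exact ⟨v, funext hv⟩

end Aut

end BV

/-- for a Delsarte polynomial `W` with invertible exponent matrix `A` and charges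
`q = A⁻¹𝟙`, the map `v ↦ diag(e^{2πiv_j})` induces a group isomorphism from
`{v ∈ ℚⁿ/ℤⁿ : Av ∈ ℤⁿ}` (equivalently `A⁻¹ℤⁿ/ℤⁿ`) onto `Aut(W)`: it is a homomorphism, its
image is exactly `Aut(W)` (an element of `ℚⁿ` maps into `Aut(W)` iff `Av ∈ ℤⁿ`, and every
element of `Aut(W)` arises this way), and its kernel is exactly `ℤⁿ`.  The class of `q` maps
to `j_W`, and the image of a class `v` lies in `SL(W)` iff `v_1 + ⋯ + v_n ∈ ℤ`. -/
theorem delsarte_aut_description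
    (n : ℕ) (A : Matrix (Fin n) (Fin n) ℕ)
    (hA : IsUnit ((A.map (Nat.cast : ℕ → ℚ)).det))
    (q : Fin n → ℚ) (hq : (A.map (Nat.cast : ℕ → ℚ)) *ᵥ q = 1) :
    (∀ v w : Fin n → ℚ,
        (fun j => BV.eU (v j + w j)) = (fun j => BV.eU (v j)) * (fun j => BV.eU (w j)))
    ∧ (∀ v : Fin n → ℚ,
        (∀ i, ∃ k : ℤ, ((A.map (Nat.cast : ℕ → ℚ)) *ᵥ v) i = (k : ℚ))
          ↔ (fun j => BV.eU (v j)) ∈ BV.autP (BV.wfun A))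
    ∧ (∀ g ∈ BV.autP (BV.wfun A), ∃ v : Fin n → ℚ,
        (∀ i, ∃ k : ℤ, ((A.map (Nat.cast : ℕ → ℚ)) *ᵥ v) i = (k : ℚ))
          ∧ (fun j => BV.eU (v j)) = g)
    ∧ (∀ v : Fin n → ℚ,
        (fun j => BV.eU (v j)) = 1 ↔ ∀ j, ∃ k : ℤ, v j = (k : ℚ))
    ∧ (fun j => BV.eU (q j)) = BV.jW q
    ∧ (∀ v : Fin n → ℚ, (∀ i, ∃ k : ℤ, ((A.map (Nat.cast : ℕ → ℚ)) *ᵥ v) i = (k : ℚ)) →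
        ((fun j => BV.eU (v j)) ∈ BV.slP (BV.wfun A) ↔ ∃ k : ℤ, ∑ j, v j = (k : ℚ))) := by
  refine ⟨fun v w ↦ funext fun j ↦ BV.eU_add (v j) (w j), fun v ↦ (BV.jW_mem_autP_iff A v).symm,
    fun g hg ↦ ?_, BV.jW_eq_one_iff, rfl, fun v hv ↦ ?_⟩
  · obtain ⟨v, rfl⟩ := BV.exists_jW_eq_of_mem_autP_wfun hA hg
    exact ⟨v, (BV.jW_mem_autP_iff A v).1 hg, rfl⟩
  · have hv_aut : BV.jW v ∈ BV.autP (BV.wfun A) := (BV.jW_mem_autP_iff A v).2 hv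
    exact (and_iff_right hv_aut).trans (BV.jW_mem_ker_prodHom_iff v)
end
end

section
/- Let f ∈ ℂ[x_1,…,x_m] be weighted homogeneous of degree ℓu_0 with respect to positive integer weights (u_1,…,u_m), i.e. f(λ^{u_1}x_1,…,λ^{u_m}x_m) = λ^{ℓu_0}f(x) for all λ ∈ ℂ, and let g ∈ ℂ[y_1,…,y_n] be weighted homogeneous of degree ℓv_0 with respect to positive integer weights (v_1,…,v_n). Then for all complex numbers x_0,x_1,…,x_m,y_0,y_1,…,y_n satisfying x_0^ℓ + f(x_1,…,x_m) = 0 and y_0^ℓ + g(y_1,…,y_n) = 0, one has f((x_0^{s_0}y_0^{t})^{u_1}x_1,…,(x_0^{s_0}y_0^{t})^{u_m}x_m) − g((x_0^{s}y_0^{t_0})^{v_1}y_1,…,(x_0^{s}y_0^{t_0})^{v_n}y_n) = 0. In other words, the twist map Φ sends the product of the hypersurfaces X_1 = {x_0^ℓ + f = 0} and X_2 = {y_0^ℓ + g = 0} into the hypersurface X = {f(x) − g(y) = 0}. -/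
open BigOperators

/-! On the cover `a ^ ℓ + f x = 0` the value `f x` is minus an `ℓ`-th power, and homogeneity of
degree `ℓ * d` keeps it one: rescaling `x` by `a ^ k * b` produces `-(a ^ (k * d + 1) * b ^ d) ^ ℓ`.
The relations `v₀ s = s₀ u₀ + 1` and `u₀ t = t₀ v₀ + 1` are exactly what makes the `ℓ`-th roots
obtained from `f` and from `g` coincide, both being `x₀ ^ (v₀ s) * y₀ ^ (u₀ t)`. -/

section WeightedTwist

variable {R ι κ : Type*} [CommRing R]

/-- The weighted scaling `c · x = (c ^ wᵢ xᵢ)ᵢ` of affine space, with weights `w`. -/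
def weightedScale (w : ι → ℕ) (c : R) (x : ι → R) : ι → R :=
  fun i => c ^ w i * x i

/-- Weighted homogeneity of degree `d`, for arbitrary functions on affine space; a polynomial enters
through its evaluation map. -/
def IsWeightedHomogeneousFun (w : ι → ℕ) (d : ℕ) (f : (ι → R) → R) : Prop :=
  ∀ c x, f (weightedScale w c x) = c ^ d * f x

/-- The hypersurface `x₀ ^ ℓ + f x = 0`, an `ℓ`-fold cyclic cover of affine space; the points
`(x₀, x)` carry the distinguished coordinate first. -/
def cyclicCover (ℓ : ℕ) (f : (ι → R) → R) : Set (R × (ι → R)) :=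
  {p | p.1 ^ ℓ + f p.2 = 0}

/-- The twist map `Φ((x₀, x), (y₀, y))`, with the exponents `s₀, t₀, s, t` as free parameters. -/
def twistMap (u : ι → ℕ) (v : κ → ℕ) (s₀ t₀ s t : ℕ) :
    (R × (ι → R)) × (R × (κ → R)) → (ι → R) × (κ → R) :=
  fun p => (weightedScale u (p.1.1 ^ s₀ * p.2.1 ^ t) p.1.2,
    weightedScale v (p.1.1 ^ s * p.2.1 ^ t₀) p.2.2)

theorem IsWeightedHomogeneousFun.apply_weightedScale_of_mem_cyclicCover {w : ι → ℕ} {ℓ d : ℕ}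
    {f : (ι → R) → R} (hf : IsWeightedHomogeneousFun w (ℓ * d) f) {a : R} {x : ι → R}
    (hx : (a, x) ∈ cyclicCover ℓ f) (k : ℕ) (b : R) :
    f (weightedScale w (a ^ k * b) x) = -(a ^ (k * d + 1) * b ^ d) ^ ℓ := by
  have f_eq : f x = -a ^ ℓ := eq_neg_of_add_eq_zero_right hx
  calc f (weightedScale w (a ^ k * b) x)
      = (a ^ k * b) ^ (ℓ * d) * f x := hf _ _
    _ = (a ^ k * b) ^ (ℓ * d) * -a ^ ℓ := by rw [f_eq]
    _ = -(a ^ (k * d + 1) * b ^ d) ^ ℓ := by ring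

theorem twist_map_into_hypersurface_general {ℓ u₀ v₀ s₀ t₀ s t : ℕ}
    (hs : v₀ * s = s₀ * u₀ + 1) (ht : u₀ * t = t₀ * v₀ + 1)
    {u : ι → ℕ} {v : κ → ℕ} {f : (ι → R) → R} {g : (κ → R) → R}
    (hf : IsWeightedHomogeneousFun u (ℓ * u₀) f) (hg : IsWeightedHomogeneousFun v (ℓ * v₀) g) :
    Set.MapsTo (twistMap u v s₀ t₀ s t) (cyclicCover ℓ f ×ˢ cyclicCover ℓ g)
      {q | f q.1 - g q.2 = 0} := by
  rintro ⟨⟨x₀, x⟩, ⟨y₀, y⟩⟩ ⟨hx, hy⟩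
  have f_twist : f (weightedScale u (x₀ ^ s₀ * y₀ ^ t) x)
      = -(x₀ ^ (v₀ * s) * y₀ ^ (u₀ * t)) ^ ℓ := by
    rw [hf.apply_weightedScale_of_mem_cyclicCover hx, ← hs, ← pow_mul, mul_comm t]
  have g_twist : g (weightedScale v (x₀ ^ s * y₀ ^ t₀) y)
      = -(x₀ ^ (v₀ * s) * y₀ ^ (u₀ * t)) ^ ℓ := by
    rw [mul_comm (x₀ ^ s), hg.apply_weightedScale_of_mem_cyclicCover hy, ← ht, ← pow_mul,
      mul_comm s, mul_comm (y₀ ^ _)]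
  exact sub_eq_zero.mpr (f_twist.trans g_twist.symm)

end WeightedTwist

/-- the twist map `Φ` sends the product of the hypersurfaces
`X₁ = {x₀^ℓ + f = 0}` and `X₂ = {y₀^ℓ + g = 0}` into the hypersurface `X = {f(x) − g(y) = 0}`,
for `f`, `g` weighted homogeneous of degrees `ℓu₀`, `ℓv₀` with respect to positive weights
`u`, `v`, and `s₀, t₀, s, t` the data attached to the coprime pair `(u₀, v₀)`. -/
theorem twist_map_into_hypersurface
    (ℓ u0 v0 : ℕ) (hl : 2 ≤ ℓ) (hu0 : 0 < u0) (hv0 : 0 < v0)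
    (hco : Nat.Coprime u0 v0)
    (s0 t0 s t : ℕ) (hs0 : s0 < v0) (ht0 : t0 < u0)
    (hs : v0 * s = s0 * u0 + 1) (ht : u0 * t = t0 * v0 + 1)
    (m n : ℕ) (u : Fin m → ℕ) (v : Fin n → ℕ)
    (hu : ∀ i, 0 < u i) (hv : ∀ i, 0 < v i)
    (f : (Fin m → ℂ) → ℂ) (g : (Fin n → ℂ) → ℂ)
    (hf : ∀ (lam : ℂ) (x : Fin m → ℂ), f (fun i => lam ^ u i * x i) = lam ^ (ℓ * u0) * f x)
    (hg : ∀ (lam : ℂ) (y : Fin n → ℂ), g (fun i => lam ^ v i * y i) = lam ^ (ℓ * v0) * g y)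
    (x0 : ℂ) (x : Fin m → ℂ) (y0 : ℂ) (y : Fin n → ℂ)
    (hx : x0 ^ ℓ + f x = 0) (hy : y0 ^ ℓ + g y = 0) :
    f (fun i => (x0 ^ s0 * y0 ^ t) ^ u i * x i)
      - g (fun i => (x0 ^ s * y0 ^ t0) ^ v i * y i) = 0 :=
  twist_map_into_hypersurface_general hs ht hf hg
    (x := ((x0, x), (y0, y))) ⟨hx, hy⟩
end

section
/- Let u_0, v_0 be coprime positive integers, ℓ ≥ 2, and s_0, t_0, s, t as in the definition of the twist map. For every γ ∈ ℂ with γ^ℓ = 1 there exists λ ∈ ℂ^* such that λ^{v_0} = γ^{s_0+t} and λ^{u_0} = γ^{s+t_0}. Consequently, for all complex numbers x_0,…,x_m,y_0,…,y_n and all positive integer weight vectors u = (u_1,…,u_m), v = (v_1,…,v_n), the twist map satisfies Φ((γx_0,x),(γy_0,y))_i = λ^{v_0u_i}·Φ((x_0,x),(y_0,y))_i for the x-coordinates and Φ((γx_0,x),(γy_0,y))_j = λ^{u_0v_j}·Φ((x_0,x),(y_0,y))_j for the y-coordinates; i.e. Φ is invariant under the μ_ℓ-action γ·((x_0,x),(y_0,y))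 = ((γx_0,x),(γy_0,y)) up to the weighted ℂ^*-action with weights (v_0u_1,…,v_0u_m,u_0v_1,…,u_0v_n). -/
open BigOperators

/-!
The exponents `s₀, t` and `s, t₀` are such that `λ = γ ^ (s t - s₀ t₀)` solves both power equations:
multiplying `s t - s₀ t₀` by `v₀` or by `u₀` and eliminating with the two Bézout relations leaves
`s₀ + t` or `s + t₀`. Each twisting factor is a monomial of degree `s₀ + t` or `s + t₀` in
`(x₀, y₀)`, so rescaling both variables by `γ` pulls out exactly these powers of `γ`.
-/

/-- The truncated subtraction is exact, since the two relations force `s₀ t₀ ≤ s t`. -/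
theorem mul_mul_sub_mul_eq_add_of_bezout {u0 v0 s0 t0 s t : ℕ}
    (hs : v0 * s = s0 * u0 + 1) (ht : u0 * t = t0 * v0 + 1) :
    v0 * (s * t - s0 * t0) = s0 + t := by
  have expand : v0 * (s * t) = v0 * (s0 * t0) + (s0 + t) := calc
    v0 * (s * t) = (v0 * s) * t := by ring
    _ = s0 * (u0 * t) + t := by rw [hs]; ring
    _ = v0 * (s0 * t0) + (s0 + t) := by rw [ht]; ring
  rw [Nat.mul_sub, expand, Nat.add_sub_cancel_left]

section CommMonoid

variable {M : Type*} [CommMonoid M]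

theorem mul_pow_mul_mul_pow (γ x y : M) (a b : ℕ) :
    (γ * x) ^ a * (γ * y) ^ b = γ ^ (a + b) * (x ^ a * y ^ b) := by
  rw [mul_pow, mul_pow, mul_mul_mul_comm, pow_add]

theorem mul_pow_mul_mul_pow_pow_mul_of_pow_eq {γ lam : M} {a b d : ℕ}
    (h : lam ^ d = γ ^ (a + b)) (w : ℕ) (x y z : M) :
    ((γ * x) ^ a * (γ * y) ^ b) ^ w * z = lam ^ (d * w) * ((x ^ a * y ^ b) ^ w * z) := by
  rw [mul_pow_mul_mul_pow, mul_pow, ← h, ← pow_mul, mul_assoc]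

theorem twist_map_equivariance_general {u0 v0 s0 t0 s t : ℕ}
    (hs : v0 * s = s0 * u0 + 1) (ht : u0 * t = t0 * v0 + 1)
    {γ lam : M} (hlam : lam = γ ^ (s * t - s0 * t0)) :
    lam ^ v0 = γ ^ (s0 + t) ∧ lam ^ u0 = γ ^ (s + t0) ∧
      (∀ (w : ℕ) (x0 y0 x : M),
        ((γ * x0) ^ s0 * (γ * y0) ^ t) ^ w * x
          = lam ^ (v0 * w) * ((x0 ^ s0 * y0 ^ t) ^ w * x)) ∧
      (∀ (w : ℕ) (x0 y0 y : M),
        ((γ * x0) ^ s * (γ * y0) ^ t0) ^ w * y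
          = lam ^ (u0 * w) * ((x0 ^ s * y0 ^ t0) ^ w * y)) := by
  have hv : lam ^ v0 = γ ^ (s0 + t) := by
    rw [hlam, ← pow_mul', mul_mul_sub_mul_eq_add_of_bezout hs ht]
  have hu : lam ^ u0 = γ ^ (s + t0) := by
    rw [hlam, ← pow_mul', mul_comm s, mul_comm s0, mul_mul_sub_mul_eq_add_of_bezout ht hs,
      add_comm]
  exact ⟨hv, hu, mul_pow_mul_mul_pow_pow_mul_of_pow_eq hv,
    mul_pow_mul_mul_pow_pow_mul_of_pow_eq hu⟩

end CommMonoid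

/-- equivariance of the twist map under the `μ_ℓ`-action.  For every `ℓ`-th root
of unity `γ` there is `λ ∈ ℂ*` with `λ^{v₀} = γ^{s₀+t}` and `λ^{u₀} = γ^{s+t₀}`, and the twist
map transforms the `x`-coordinates by `λ^{v₀u_i}` and the `y`-coordinates by `λ^{u₀v_j}`,
i.e. `Φ` is invariant under `γ·((x₀,x),(y₀,y)) = ((γx₀,x),(γy₀,y))` up to the weighted
`ℂ*`-action with weights `(v₀u, u₀v)`. -/
theorem twist_map_equivariance
    (ℓ u0 v0 : ℕ) (hl : 2 ≤ ℓ) (hu0 : 0 < u0) (hv0 : 0 < v0)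
    (hco : Nat.Coprime u0 v0)
    (s0 t0 s t : ℕ) (hs0 : s0 < v0) (ht0 : t0 < u0)
    (hs : v0 * s = s0 * u0 + 1) (ht : u0 * t = t0 * v0 + 1)
    (γ : ℂ) (hγ : γ ^ ℓ = 1) :
    ∃ lam : ℂ, lam ≠ 0 ∧ lam ^ v0 = γ ^ (s0 + t) ∧ lam ^ u0 = γ ^ (s + t0) ∧
      (∀ (m : ℕ) (u : Fin m → ℕ), (∀ i, 0 < u i) → ∀ (i : Fin m) (x0 y0 xi : ℂ),
        ((γ * x0) ^ s0 * (γ * y0) ^ t) ^ u i * xi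
          = lam ^ (v0 * u i) * ((x0 ^ s0 * y0 ^ t) ^ u i * xi)) ∧
      (∀ (n : ℕ) (v : Fin n → ℕ), (∀ j, 0 < v j) → ∀ (j : Fin n) (x0 y0 yj : ℂ),
        ((γ * x0) ^ s * (γ * y0) ^ t0) ^ v j * yj
          = lam ^ (u0 * v j) * ((x0 ^ s * y0 ^ t0) ^ v j * yj)) := by
  have hγ0 : γ ≠ 0 := (IsUnit.of_pow_eq_one hγ (by omega)).ne_zero
  obtain ⟨hv, hu, hx, hy⟩ := twist_map_equivariance_general hs ht (γ := γ) rfl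
  exact ⟨γ ^ (s * t - s0 * t0), pow_ne_zero _ hγ0, hv, hu,
    fun _ u _ i => hx (u i), fun _ v _ j => hy (v j)⟩
end

section
/- With W_E, W_S, W_{E,S} as in the standing assumptions (in particular gcd(u_0,v_0) = 1 and gcd(u_0^⊤,v_0^⊤) = 1), every element (α_1,α_2,β_1,β_2,β_3) of SL(W_{E,S}) satisfies α_1α_2 = β_1β_2β_3 ∈ {1,−1}; that is, SL^{±1}(W_{E,S}) = SL(W_{E,S}). -/
open Complex BigOperators Matrix

noncomputable section

namespace BV

/-- A polynomial is non-degenerate if the only common zero (over `ℂ`) of the polynomial and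
all of its first partial derivatives is the origin. -/
def NonDeg {σ : Type*} [Fintype σ] [DecidableEq σ] (P : MvPolynomial σ ℂ) : Prop :=
  ∀ x : σ → ℂ, MvPolynomial.eval x P = 0 →
    (∀ i, MvPolynomial.eval x (MvPolynomial.pderiv i P) = 0) → x = 0

/-- `W_E = x₀² + f(x₁,x₂)` as a polynomial, where `f` is the Delsarte polynomial with
exponent matrix `ÂE`. -/
noncomputable def WEpoly (AhE : Matrix (Fin 2) (Fin 2) ℕ) : MvPolynomial (Fin 1 ⊕ Fin 2) ℂ :=
  MvPolynomial.X (Sum.inl 0) ^ 2 + ∑ i, ∏ j, MvPolynomial.X (Sum.inr j) ^ AhE i j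

/-- `W_S = y₀² + g(y₁,y₂,y₃)` as a polynomial. -/
noncomputable def WSpoly (AhS : Matrix (Fin 3) (Fin 3) ℕ) : MvPolynomial (Fin 1 ⊕ Fin 3) ℂ :=
  MvPolynomial.X (Sum.inl 0) ^ 2 + ∑ i, ∏ j, MvPolynomial.X (Sum.inr j) ^ AhS i j

/-- `W_E = x₀² + f(x₁,x₂)` as a function. -/
noncomputable def PE (AhE : Matrix (Fin 2) (Fin 2) ℕ) : ((Fin 1 ⊕ Fin 2) → ℂ) → ℂ :=
  fun x => x (Sum.inl 0) ^ 2 + ∑ i, ∏ j, x (Sum.inr j) ^ AhE i j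

/-- `W_S = y₀² + g(y₁,y₂,y₃)` as a function. -/
noncomputable def PS (AhS : Matrix (Fin 3) (Fin 3) ℕ) : ((Fin 1 ⊕ Fin 3) → ℂ) → ℂ :=
  fun y => y (Sum.inl 0) ^ 2 + ∑ i, ∏ j, y (Sum.inr j) ^ AhS i j

/-- `W_{E,S} = f(x) − g(y)` as a function. -/
noncomputable def PES (AhE : Matrix (Fin 2) (Fin 2) ℕ) (AhS : Matrix (Fin 3) (Fin 3) ℕ) :
    ((Fin 2 ⊕ Fin 3) → ℂ) → ℂ :=
  fun z => (∑ i, ∏ j, z (Sum.inl j) ^ AhE i j) - (∑ i, ∏ j, z (Sum.inr j) ^ AhS i j)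

/-- The charges of `W_E`, computed from the weights `(u₀,u₁,u₂)` and the degree `2u₀`. -/
def qE3 (u0 u1 u2 : ℕ) : Fin 1 ⊕ Fin 2 → ℚ :=
  Sum.elim (fun _ => (u0 : ℚ) / (2 * u0)) (fun j => (![u1, u2] j : ℚ) / (2 * u0))

/-- The charges of `W_S`. -/
def qS4 (v0 v1 v2 v3 : ℕ) : Fin 1 ⊕ Fin 3 → ℚ :=
  Sum.elim (fun _ => (v0 : ℚ) / (2 * v0)) (fun j => (![v1, v2, v3] j : ℚ) / (2 * v0))

/-- The charges of `W_{E,S}`, computed from the weights `(v₀u₁,v₀u₂,u₀v₁,u₀v₂,u₀v₃)`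
and the degree `2u₀v₀`. -/
def qES5 (u0 u1 u2 v0 v1 v2 v3 : ℕ) : Fin 2 ⊕ Fin 3 → ℚ :=
  Sum.elim (fun j => ((v0 * ![u1, u2] j : ℕ) : ℚ) / (2 * u0 * v0))
    (fun j => ((u0 * ![v1, v2, v3] j : ℕ) : ℚ) / (2 * u0 * v0))

/-- The full exponent matrix `A_E = diag(2, ÂE)` of `W_E`. -/
def AEfull (AhE : Matrix (Fin 2) (Fin 2) ℕ) :
    Matrix (Fin 1 ⊕ Fin 2) (Fin 1 ⊕ Fin 2) ℕ :=
  Matrix.fromBlocks (Matrix.of ![![2]]) 0 0 AhE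

/-- The full exponent matrix `A_S = diag(2, ÂS)` of `W_S`. -/
def ASfull (AhS : Matrix (Fin 3) (Fin 3) ℕ) :
    Matrix (Fin 1 ⊕ Fin 3) (Fin 1 ⊕ Fin 3) ℕ :=
  Matrix.fromBlocks (Matrix.of ![![2]]) 0 0 AhS

/-- The exponent matrix `A_{E,S} = diag(ÂE, ÂS)` of `W_{E,S}`. -/
def AES (AhE : Matrix (Fin 2) (Fin 2) ℕ) (AhS : Matrix (Fin 3) (Fin 3) ℕ) :
    Matrix (Fin 2 ⊕ Fin 3) (Fin 2 ⊕ Fin 3) ℕ :=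
  Matrix.fromBlocks AhE 0 0 AhS

end BV

/-!
Distinct monomials are linearly independent, so a diagonal symmetry of `f` fixes each of its
monomials separately. The transposed weights of `f` exhibit the `2u₀^⊤`-th power of the
determinant as a product of powers of these monomials, so `(α₁α₂)^(2u₀^⊤) = 1`, and likewise
`(β₁β₂β₃)^(2v₀^⊤) = 1`. Since the two determinants are mutually inverse, the order of `α₁α₂` divides
`gcd(2u₀^⊤, 2v₀^⊤) = 2`.
-/

lemma mem_autP_of_mem_autP_sub {ι κ : Type*} {f : (ι → ℂ) → ℂ} {g : (κ → ℂ) → ℂ}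
    {lam : ι ⊕ κ → ℂˣ}
    (hlam : lam ∈ BV.autP fun z => f (z ∘ Sum.inl) - g (z ∘ Sum.inr)) :
    lam ∘ Sum.inl ∈ BV.autP f ∧ lam ∘ Sum.inr ∈ BV.autP g := by
  have invariant (x : ι → ℂ) (y : κ → ℂ) :
      f (fun i => lam (Sum.inl i) * x i) - g (fun j => lam (Sum.inr j) * y j) = f x - g y :=
    hlam (Sum.elim x y)
  have smul_zero_inl : (fun i => (lam (Sum.inl i) : ℂ) * (0 : ι → ℂ) i) = 0 :=
    funext fun _ => mul_zero _
  have smul_zero_inr : (fun j => (lam (Sum.inr j) : ℂ) * (0 : κ → ℂ) j) = 0 :=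
    funext fun _ => mul_zero _
  have inl_invariant (x : ι → ℂ) : f (fun i => lam (Sum.inl i) * x i) = f x := by
    simpa only [smul_zero_inr, sub_left_inj] using invariant x 0
  have inr_invariant (y : κ → ℂ) : g (fun j => lam (Sum.inr j) * y j) = g y := by
    simpa only [smul_zero_inl, sub_right_inj] using invariant 0 y
  exact ⟨inl_invariant, inr_invariant⟩

section Symmetries

variable {ι κ m n : Type*} [Fintype ι] [Fintype κ] [Fintype m] [Fintype n]

lemma eq_zero_of_sum_monomial_eq_zero {σ R : Type*} [CommSemiring R] [NoZeroDivisors R]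
    [CharZero R] {e : m → σ →₀ ℕ} {r : (σ →₀ ℕ) → R}
    (h : ∑ k, MvPolynomial.monomial (e k) (r (e k)) = 0) (i : m) : r (e i) = 0 := by
  classical
  -- `e` need not be injective: the coefficient at `e i` counts the indices sharing this exponent.
  have card_mul_eq_zero : (Finset.card {k | e k = e i} : R) * r (e i) = 0 :=
    calc (Finset.card {k | e k = e i} : R) * r (e i)
        = ∑ k with e k = e i, r (e k) := by
          rw [← nsmul_eq_mul, ← Finset.sum_const]
          exact Finset.sum_congr rfl fun k hk => by rw [(Finset.mem_filter_univ k).1 hk]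
      _ = (∑ k, MvPolynomial.monomial (e k) (r (e k))).coeff (e i) := by
          simp only [MvPolynomial.coeff_sum, MvPolynomial.coeff_monomial, Finset.sum_filter]
      _ = 0 := by rw [h, MvPolynomial.coeff_zero]
  have card_ne_zero : (Finset.card {k | e k = e i} : R) ≠ 0 :=
    Nat.cast_ne_zero.2 (Finset.card_ne_zero_of_mem ((Finset.mem_filter_univ i).2 rfl))
  exact (mul_eq_zero.1 card_mul_eq_zero).resolve_left card_ne_zero

lemma prod_pow_eq_one_of_sum_prod_mul_pow_eq {R : Type*} [CommRing R] [IsDomain R] [CharZero R]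
    (A : Matrix m ι ℕ) {c : ι → R}
    (hc : ∀ x : ι → R, ∑ i, ∏ j, (c j * x j) ^ A i j = ∑ i, ∏ j, x j ^ A i j) (i : m) :
    ∏ j, c j ^ A i j = 1 := by
  have : Infinite R := CharZero.infinite R
  let e (k : m) : ι →₀ ℕ := Finsupp.equivFunOnFinite.symm (A k)
  have eval_monomial_e (x : ι → R) (k : m) (r : R) :
      MvPolynomial.eval x (MvPolynomial.monomial (e k) r) = r * ∏ j, x j ^ A k j := by
    rw [MvPolynomial.eval_monomial, Finsupp.prod_fintype _ _ fun _ => pow_zero _]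
    rfl
  have sum_eq_zero : ∑ k, MvPolynomial.monomial (e k) (∏ j, c j ^ A k j - 1) = 0 :=
    MvPolynomial.funext fun x => by
      simp only [map_sum, eval_monomial_e, sub_mul, one_mul, Finset.sum_sub_distrib, map_zero,
        ← Finset.prod_mul_distrib, ← mul_pow, hc x, sub_self]
  exact sub_eq_zero.1
    (eq_zero_of_sum_monomial_eq_zero (r := fun d => ∏ j, c j ^ d j - 1) sum_eq_zero i)

lemma prod_pow_eq_one_of_transpose_weights {M : Type*} [CommMonoid M] (A : Matrix m ι ℕ)
    {c : ι → M} (hc : ∀ i, ∏ j, c j ^ A i j = 1) {w : m → ℕ} {D : ℕ}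
    (hw : ∀ j, ∑ i, A i j * w i = D) : (∏ j, c j) ^ D = 1 :=
  calc (∏ j, c j) ^ D = ∏ j, ∏ i, (c j ^ A i j) ^ w i := by
        simp only [← pow_mul, Finset.prod_pow_eq_pow_sum, hw, Finset.prod_pow]
    _ = ∏ i, (∏ j, c j ^ A i j) ^ w i := by
        rw [Finset.prod_comm]
        simp only [Finset.prod_pow]
    _ = 1 := by simp only [hc, one_pow, Finset.prod_const_one]

lemma prod_pow_eq_one_of_mem_autP (A : Matrix m ι ℕ) {w : m → ℕ} {D : ℕ}
    (hw : ∀ j, ∑ i, A i j * w i = D) {lam : ι → ℂˣ}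
    (hlam : lam ∈ BV.autP fun x => ∑ i, ∏ j, x j ^ A i j) : (∏ j, lam j) ^ D = 1 := by
  refine prod_pow_eq_one_of_transpose_weights A (fun i => Units.ext ?_) hw
  simpa only [Units.coe_prod, Units.val_pow_eq_pow_val, Units.val_one] using
    prod_pow_eq_one_of_sum_prod_mul_pow_eq A hlam i

theorem SL_eq_SLpm_general (A : Matrix m ι ℕ) (B : Matrix n κ ℕ) {wA : m → ℕ} {wB : n → ℕ}
    {u v : ℕ} (hA : ∀ j, ∑ i, A i j * wA i = 2 * u) (hB : ∀ j, ∑ i, B i j * wB i = 2 * v)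
    (huv : u.Coprime v) {lam : ι ⊕ κ → ℂˣ}
    (hlam : lam ∈ BV.slP fun z : ι ⊕ κ → ℂ =>
      (∑ i, ∏ j, z (Sum.inl j) ^ A i j) - ∑ i, ∏ j, z (Sum.inr j) ^ B i j) :
    ∏ i, lam (Sum.inl i) = ∏ j, lam (Sum.inr j) ∧
      (∏ i, lam (Sum.inl i) = 1 ∨ ∏ i, lam (Sum.inl i) = -1) := by
  obtain ⟨lam_mem_autP, det_eq_one : ∏ j, lam j = 1⟩ := hlam
  rw [Fintype.prod_sum_type] at det_eq_one
  obtain ⟨inl_mem, inr_mem⟩ := mem_autP_of_mem_autP_sub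
    (f := fun x => ∑ i, ∏ j, x j ^ A i j) (g := fun y => ∑ i, ∏ j, y j ^ B i j) lam_mem_autP
  set α := ∏ i, lam (Sum.inl i)
  set β := ∏ j, lam (Sum.inr j)
  have α_pow : α ^ (2 * u) = 1 := prod_pow_eq_one_of_mem_autP A hA inl_mem
  have β_pow : β ^ (2 * v) = 1 := prod_pow_eq_one_of_mem_autP B hB inr_mem
  have β_eq : β = α⁻¹ := eq_inv_of_mul_eq_one_right det_eq_one
  have α_sq : α ^ 2 = 1 := by
    rw [β_eq, inv_pow, inv_eq_one] at β_pow
    simpa only [Nat.gcd_mul_left, huv.gcd_eq_one, mul_one] using pow_gcd_eq_one.2 ⟨α_pow, β_pow⟩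
  have α_inv : α⁻¹ = α := inv_eq_of_mul_eq_one_left (by rwa [← sq])
  exact ⟨by rw [β_eq, α_inv], (Units.inv_eq_self_iff _).1 α_inv⟩

end Symmetries

/-- under the standing assumptions (in particular `gcd(u₀,v₀) = 1` and
`gcd(u₀^⊤,v₀^⊤) = 1`), every element `(α₁,α₂,β₁,β₂,β₃)` of `SL(W_{E,S})` satisfies
`α₁α₂ = β₁β₂β₃ ∈ {1,−1}`; that is, `SL^{±1}(W_{E,S}) = SL(W_{E,S})`. -/
theorem SL_eq_SLpm
    (AhE : Matrix (Fin 2) (Fin 2) ℕ) (AhS : Matrix (Fin 3) (Fin 3) ℕ)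
    (u0 u1 u2 v0 v1 v2 v3 : ℕ)
    (hEdet : IsUnit ((AhE.map (Nat.cast : ℕ → ℚ)).det))
    (hSdet : IsUnit ((AhS.map (Nat.cast : ℕ → ℚ)).det))
    (hEnd : BV.NonDeg (BV.WEpoly AhE))
    (hSnd : BV.NonDeg (BV.WSpoly AhS))
    (hupos : 0 < u0 ∧ 0 < u1 ∧ 0 < u2)
    (hvpos : 0 < v0 ∧ 0 < v1 ∧ 0 < v2 ∧ 0 < v3)
    (hEhom : ∀ i, ∑ j, AhE i j * ![u1, u2] j = 2 * u0)
    (hShom : ∀ i, ∑ j, AhS i j * ![v1, v2, v3] j = 2 * v0)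
    (hEnorm : Nat.gcd u1 u2 = 1 ∧ Nat.gcd u0 u2 = 1 ∧ Nat.gcd u0 u1 = 1)
    (hSnorm : Nat.gcd (Nat.gcd v1 v2) v3 = 1 ∧ Nat.gcd (Nat.gcd v0 v2) v3 = 1 ∧
      Nat.gcd (Nat.gcd v0 v1) v3 = 1 ∧ Nat.gcd (Nat.gcd v0 v1) v2 = 1)
    (hco : Nat.Coprime u0 v0)
    (u0T u1T u2T v0T v1T v2T v3T : ℕ)
    (hETpos : 0 < u0T ∧ 0 < u1T ∧ 0 < u2T)
    (hSTpos : 0 < v0T ∧ 0 < v1T ∧ 0 < v2T ∧ 0 < v3T)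
    (hEThom : ∀ i, ∑ j, AhE j i * ![u1T, u2T] j = 2 * u0T)
    (hSThom : ∀ i, ∑ j, AhS j i * ![v1T, v2T, v3T] j = 2 * v0T)
    (hETmin : ∀ (D w0 : ℕ) (wa : Fin 2 → ℕ), 0 < D → D = 2 * w0 →
      (∀ i, ∑ j, AhE j i * wa j = D) → 2 * u0T ≤ D)
    (hSTmin : ∀ (D w0 : ℕ) (wb : Fin 3 → ℕ), 0 < D → D = 2 * w0 →
      (∀ i, ∑ j, AhS j i * wb j = D) → 2 * v0T ≤ D)
    (hcoT : Nat.Coprime u0T v0T)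
    :
    ∀ lam ∈ BV.slP (BV.PES AhE AhS),
      lam (Sum.inl 0) * lam (Sum.inl 1)
          = lam (Sum.inr 0) * lam (Sum.inr 1) * lam (Sum.inr 2)
        ∧ (lam (Sum.inl 0) * lam (Sum.inl 1) = 1
            ∨ lam (Sum.inl 0) * lam (Sum.inl 1) = -1) := by
  intro lam hlam
  simpa only [Fin.prod_univ_two, Fin.prod_univ_three] using
    SL_eq_SLpm_general AhE AhS hEThom hSThom hcoT hlam
end
end

section
/- With W_E, W_S, W_{E,S} as in the standing assumptions, identify S̃L(W) with {v ∈ A^{-1}ℤ^n/ℤ^n : Σ_i v_i ∈ ℤ}/⟨q⟩ for each of the polynomials W_{E,S}, W_E, W_S and their transposes, and let θ̃ : S̃L(W_{E,S}) → S̃L(W_E) × S̃L(W_S) be the isomorphism given on representatives (α,β) = (α_1,α_2,β_1,β_2,β_3) with α_1+α_2 ∈ ℤ and β_1+β_2+β_3 ∈ ℤ by θ̃[(α,β)] = ([(0,α_1,α_2)], [(0,β_1,β_2,β_3)]), and let θ̃^⊤ : S̃L(W_{E,S}^⊤) → S̃L(W_E^⊤) × S̃L(W_S^⊤) be the analogous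 isomorphism for the transposed polynomials. Then for all subgroups G_E ⊂ S̃L(W_E) and G_S ⊂ S̃L(W_S), setting G_{E,S} := θ̃^{-1}(G_E × G_S), one has θ̃^⊤(G_{E,S}^⊤) = G_E^⊤ × G_S^⊤. -/
open Complex BigOperators Matrix

namespace BV

/-- `x ∈ ℚ` is an integer. -/
def intQ (x : ℚ) : Prop := ∃ k : ℤ, x = (k : ℚ)

/-- The set of representatives of `{v ∈ ℚⁿ/ℤⁿ : Av ∈ ℤⁿ, Σᵢ vᵢ ∈ ℤ}`, whose quotient by
`⟨ℤⁿ, q⟩` is the identification of `S̃L(W)`. -/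
def Vset {ι : Type*} [Fintype ι] (A : Matrix ι ι ℕ) : Set (ι → ℚ) :=
  {v | (∀ i, intQ (∑ j, (A i j : ℚ) * v j)) ∧ intQ (∑ j, v j)}

/-- The set of representatives of `0`, namely `ℤⁿ + ℤ·q`. -/
def Nset {ι : Type*} [Fintype ι] (q : ι → ℚ) : Set (ι → ℚ) :=
  {v | ∃ k : ℤ, ∀ j, intQ (v j - (k : ℚ) * q j)}

/-- Vanishing in `ℚ/ℤ` of the pairing `(u,v) ↦ uᵀAv`. -/
def pairInt {ι : Type*} [Fintype ι] (A : Matrix ι ι ℕ) (u v : ι → ℚ) : Prop :=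
  intQ (∑ i, ∑ j, u i * (A i j : ℚ) * v j)

/-- The transposed group `G^⊤ = {u ∈ S̃L(W^⊤) : uᵀAv = 0 ∀ v ∈ G}` of a subgroup
`G ⊆ S̃L(W)`, at the level of representatives: `H` is the set of representatives of
elements of `G`, and `Tset A H` is the set of representatives of elements of `G^⊤`. -/
def Tset {ι : Type*} [Fintype ι] (A : Matrix ι ι ℕ) (H : Set (ι → ℚ)) : Set (ι → ℚ) :=
  {u | u ∈ Vset Aᵀ ∧ ∀ v ∈ H, pairInt A u v}

/-- `θ̃⁻¹(G_E × G_S)` at the level of representatives, where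
`θ̃[(α,β)] = ([(0,α)],[(0,β)])` on representatives `(α,β)` with `Σα ∈ ℤ` and `Σβ ∈ ℤ`:
a vector `v` belongs to it iff, after modifying `v` by an element of `⟨ℤ⁵, q⟩`, it splits
as `(α,β)` with `Σα ∈ ℤ`, `Σβ ∈ ℤ`, `(0,α)` a representative of an element of `G_E`, and
`(0,β)` a representative of an element of `G_S`. -/
def pullSet (q5 : (Fin 2 ⊕ Fin 3) → ℚ) (A : Matrix (Fin 2 ⊕ Fin 3) (Fin 2 ⊕ Fin 3) ℕ)
    (HE : Set ((Fin 1 ⊕ Fin 2) → ℚ)) (HS : Set ((Fin 1 ⊕ Fin 3) → ℚ)) :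
    Set ((Fin 2 ⊕ Fin 3) → ℚ) :=
  {v | v ∈ Vset A ∧ ∃ v' : (Fin 2 ⊕ Fin 3) → ℚ,
    (fun j => v j - v' j) ∈ Nset q5 ∧
    intQ (∑ j, v' (Sum.inl j)) ∧ intQ (∑ j, v' (Sum.inr j)) ∧
    Sum.elim (fun _ => (0 : ℚ)) (fun j => v' (Sum.inl j)) ∈ HE ∧
    Sum.elim (fun _ => (0 : ℚ)) (fun j => v' (Sum.inr j)) ∈ HS}

end BV

/-!
Write `A`, `B` for the exponent matrices of `f`, `g` and `(α, β)` for a vector split along the two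
blocks. The pairing `uᵀ diag(A, B) v` does not change modulo `ℤ` when `u` or `v` moves within its
class, so it suffices to evaluate it on split representatives, where it is `αᵀAα' + βᵀBβ'`.
Representatives can be split on the transposed side because `(2u₀) Σα`, `(2v₀) Σβ` and `Σα + Σβ`
are integers and `gcd(u₀, v₀) = 1`, whence `k := 2 Σα` is an integer; as the charges of each block
sum to `1/2` modulo `ℤ`, subtracting `k` times the charge vector makes both partial sums integral.
Testing against `(α', 0)` and `(0, β')` separates the two blocks. Finally, the extra variable in
`x₀² + f` is harmless: multiples of the charge vector `(1/2, p)` move every element of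
`S̃L(x₀² + f)` to a representative of the form `(0, α)`.
-/

namespace BV

section Integrality

lemma intQ_iff_mem_range {x : ℚ} : intQ x ↔ x ∈ (Int.castRingHom ℚ).range := by
  simp only [intQ, RingHom.mem_range, eq_intCast, eq_comm]

lemma intQ_intCast (k : ℤ) : intQ k := ⟨k, rfl⟩

lemma intQ_natCast (n : ℕ) : intQ n := ⟨n, (Int.cast_natCast n).symm⟩

lemma intQ_zero : intQ 0 := ⟨0, Int.cast_zero.symm⟩

lemma intQ.add {x y : ℚ} (hx : intQ x) (hy : intQ y) : intQ (x + y) := by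
  rw [intQ_iff_mem_range] at *
  exact add_mem hx hy

lemma intQ.sub {x y : ℚ} (hx : intQ x) (hy : intQ y) : intQ (x - y) := by
  rw [intQ_iff_mem_range] at *
  exact sub_mem hx hy

lemma intQ.mul {x y : ℚ} (hx : intQ x) (hy : intQ y) : intQ (x * y) := by
  rw [intQ_iff_mem_range] at *
  exact mul_mem hx hy

lemma intQ_add_iff_left {x y : ℚ} (hy : intQ y) : intQ (x + y) ↔ intQ x :=
  ⟨fun h => by simpa using h.sub hy, fun h => h.add hy⟩

lemma intQ_dotProduct {ι : Type*} [Fintype ι] {u v : ι → ℚ} (hu : ∀ i, intQ (u i))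
    (hv : ∀ i, intQ (v i)) : intQ (u ⬝ᵥ v) := by
  simp only [intQ_iff_mem_range] at *
  exact sum_mem fun i _ => mul_mem (hu i) (hv i)

lemma intQ_two_mul_of_coprime {d e : ℕ} (hde : Nat.Coprime d e) {x y : ℚ}
    (hx : intQ (2 * d * x)) (hy : intQ (2 * e * y)) (hxy : intQ (x + y)) : intQ (2 * x) := by
  obtain ⟨a, b, hab⟩ : IsCoprime (d : ℤ) e := Nat.isCoprime_iff_coprime.mpr hde
  have bezout : (a * d + b * e : ℚ) = 1 := by exact_mod_cast hab
  have hey : intQ (2 * e * (x + y) - 2 * e * y) :=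
    (((intQ_natCast 2).mul (intQ_natCast e)).mul hxy).sub hy
  convert ((intQ_intCast a).mul hx).add ((intQ_intCast b).mul hey) using 1
  linear_combination (-2 * x) * bezout

end Integrality

section Pairing

variable {ι : Type*} [Fintype ι] {A : Matrix ι ι ℕ} {p p' u u' v v' : ι → ℚ}

/-- `p` is a vector of charges for the exponent matrix `A`, i.e. `Ap = 𝟙`; this determines
`p` when `A` is invertible. -/
def IsCharge (A : Matrix ι ι ℕ) (p : ι → ℚ) : Prop :=
  A.map (Nat.cast : ℕ → ℚ) *ᵥ p = 1

lemma mem_Vset_iff :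
    v ∈ Vset A ↔ (∀ i, intQ ((A.map (Nat.cast : ℕ → ℚ) *ᵥ v) i)) ∧ intQ (∑ j, v j) :=
  Iff.rfl

lemma zero_mem_Nset (p : ι → ℚ) : 0 ∈ Nset p :=
  ⟨0, by simp [intQ_zero]⟩

lemma intCast_smul_mem_Nset (k : ℤ) (p : ι → ℚ) : (k : ℚ) • p ∈ Nset p :=
  ⟨k, by simp [intQ_zero]⟩

lemma pairInt_iff_dotProduct :
    pairInt A u v ↔ intQ (u ⬝ᵥ A.map (Nat.cast : ℕ → ℚ) *ᵥ v) := by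
  simp only [pairInt, dotProduct, mulVec, map_apply, Finset.mul_sum, mul_assoc]

lemma dotProduct_transpose_mulVec :
    u ⬝ᵥ Aᵀ.map (Nat.cast : ℕ → ℚ) *ᵥ v = v ⬝ᵥ A.map (Nat.cast : ℕ → ℚ) *ᵥ u := by
  rw [transpose_map, mulVec_transpose, dotProduct_comm, dotProduct_mulVec]

lemma pairInt_transpose : pairInt Aᵀ u v ↔ pairInt A v u := by
  simp only [pairInt_iff_dotProduct, dotProduct_transpose_mulVec]

lemma pairInt_of_intQ (hu : ∀ i, intQ ((Aᵀ.map (Nat.cast : ℕ → ℚ) *ᵥ u) i))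
    (hv : ∀ i, intQ (v i)) : pairInt A u v := by
  rw [← pairInt_transpose, pairInt_iff_dotProduct]
  exact intQ_dotProduct hv hu

lemma pairInt_add_right_iff (h : pairInt A u v') : pairInt A u (v + v') ↔ pairInt A u v := by
  rw [pairInt_iff_dotProduct] at *
  rw [mulVec_add, dotProduct_add, intQ_add_iff_left h, pairInt_iff_dotProduct]

lemma IsCharge.dotProduct_mulVec_smul (hp : IsCharge A p) (u : ι → ℚ) (c : ℚ) :
    u ⬝ᵥ A.map (Nat.cast : ℕ → ℚ) *ᵥ (c • p) = c * ∑ i, u i := by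
  rw [mulVec_smul, hp, dotProduct_smul, dotProduct_one, smul_eq_mul]

lemma IsCharge.sum_eq_sum_of_transpose (hp : IsCharge A p) (hp' : IsCharge Aᵀ p') :
    ∑ i, p' i = ∑ i, p i := by
  calc ∑ i, p' i = p' ⬝ᵥ A.map (Nat.cast : ℕ → ℚ) *ᵥ p := by
        rw [hp, dotProduct_one]
    _ = p ⬝ᵥ Aᵀ.map (Nat.cast : ℕ → ℚ) *ᵥ p' := dotProduct_transpose_mulVec.symm
    _ = ∑ i, p i := by rw [hp', dotProduct_one]

lemma IsCharge.intQ_mul_sum (hp : IsCharge A p) {c : ℚ} (hc : ∀ i, intQ (c * p i))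
    (hu : ∀ i, intQ ((Aᵀ.map (Nat.cast : ℕ → ℚ) *ᵥ u) i)) : intQ (c * ∑ i, u i) := by
  rw [← hp.dotProduct_mulVec_smul, ← pairInt_iff_dotProduct]
  exact pairInt_of_intQ hu hc

lemma IsCharge.pairInt_of_mem_Nset (hp : IsCharge A p) (hu : u ∈ Vset Aᵀ) (hv : v ∈ Nset p) :
    pairInt A u v := by
  obtain ⟨k, hk⟩ := hv
  have smul_charge : pairInt A u ((k : ℚ) • p) := by
    rw [pairInt_iff_dotProduct, hp.dotProduct_mulVec_smul]
    exact (intQ_intCast k).mul hu.2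
  rw [← sub_add_cancel v ((k : ℚ) • p), pairInt_add_right_iff smul_charge]
  exact pairInt_of_intQ hu.1 hk

lemma IsCharge.pairInt_congr_right (hp : IsCharge A p) (hu : u ∈ Vset Aᵀ)
    (hv : v - v' ∈ Nset p) : pairInt A u v ↔ pairInt A u v' := by
  rw [← add_sub_cancel v' v, pairInt_add_right_iff (hp.pairInt_of_mem_Nset hu hv)]

lemma IsCharge.pairInt_congr_left (hp' : IsCharge Aᵀ p') (hv : v ∈ Vset A)
    (hu : u - u' ∈ Nset p') : pairInt A u v ↔ pairInt A u' v := by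
  rw [← pairInt_transpose, hp'.pairInt_congr_right hv hu, pairInt_transpose]

lemma IsCharge.sub_smul_mem_Vset (hp : IsCharge A p)
    (hv : ∀ i, intQ ((A.map (Nat.cast : ℕ → ℚ) *ᵥ v) i)) {k : ℤ}
    (hsum : intQ (∑ i, v i - k * ∑ i, p i)) : v - (k : ℚ) • p ∈ Vset A := by
  refine mem_Vset_iff.2 ⟨fun i => ?_, ?_⟩
  · rw [mulVec_sub, mulVec_smul, hp]
    simpa using (hv i).sub (intQ_intCast k)
  · simpa [Finset.mul_sum] using hsum

end Pairing

section Blocks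

variable {ι κ : Type*} {A : Matrix ι ι ℕ} {B : Matrix κ κ ℕ}

lemma transpose_fromBlocks_diagonal :
    (fromBlocks A 0 0 B)ᵀ = fromBlocks Aᵀ 0 0 Bᵀ := by
  simp only [fromBlocks_transpose, transpose_zero]

variable [Fintype ι] [Fintype κ] {p p' α α' : ι → ℚ} {q q' β β' : κ → ℚ}

lemma fromBlocks_diagonal_mulVec_sumElim :
    (fromBlocks A 0 0 B).map (Nat.cast : ℕ → ℚ) *ᵥ Sum.elim α β =
      Sum.elim (A.map (Nat.cast : ℕ → ℚ) *ᵥ α) (B.map (Nat.cast : ℕ → ℚ) *ᵥ β) := by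
  simp [fromBlocks_map, fromBlocks_mulVec, Matrix.map_zero]

lemma IsCharge.fromBlocks (hp : IsCharge A p) (hq : IsCharge B q) :
    IsCharge (fromBlocks A 0 0 B) (Sum.elim p q) := by
  rw [IsCharge, fromBlocks_diagonal_mulVec_sumElim, hp, hq, Sum.elim_one_one]

lemma sumElim_mem_Vset_fromBlocks_iff :
    Sum.elim α β ∈ Vset (fromBlocks A 0 0 B) ↔
      (∀ i, intQ ((A.map (Nat.cast : ℕ → ℚ) *ᵥ α) i)) ∧
      (∀ i, intQ ((B.map (Nat.cast : ℕ → ℚ) *ᵥ β) i)) ∧ intQ (∑ i, α i + ∑ i, β i) := by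
  rw [mem_Vset_iff, fromBlocks_diagonal_mulVec_sumElim]
  simp only [Sum.forall, Fintype.sum_sum_type, Sum.elim_inl, Sum.elim_inr, and_assoc]

lemma sumElim_mem_Vset_fromBlocks (hα : α ∈ Vset A) (hβ : β ∈ Vset B) :
    Sum.elim α β ∈ Vset (fromBlocks A 0 0 B) :=
  sumElim_mem_Vset_fromBlocks_iff.2 ⟨hα.1, hβ.1, hα.2.add hβ.2⟩

lemma pairInt_fromBlocks_sumElim_iff :
    pairInt (fromBlocks A 0 0 B) (Sum.elim α β) (Sum.elim α' β') ↔
      intQ (α ⬝ᵥ A.map (Nat.cast : ℕ → ℚ) *ᵥ α' + β ⬝ᵥ B.map (Nat.cast : ℕ → ℚ) *ᵥ β') := by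
  rw [pairInt_iff_dotProduct, fromBlocks_diagonal_mulVec_sumElim, sumElim_dotProduct_sumElim]

lemma pairInt_fromBlocks_sumElim (hα : pairInt A α α') (hβ : pairInt B β β') :
    pairInt (fromBlocks A 0 0 B) (Sum.elim α β) (Sum.elim α' β') :=
  pairInt_fromBlocks_sumElim_iff.2 <|
    (pairInt_iff_dotProduct.1 hα).add (pairInt_iff_dotProduct.1 hβ)

lemma pairInt_fromBlocks_sumElim_zero_right :
    pairInt (fromBlocks A 0 0 B) (Sum.elim α β) (Sum.elim α' 0) ↔ pairInt A α α' := by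
  rw [pairInt_fromBlocks_sumElim_iff, pairInt_iff_dotProduct]
  simp

lemma pairInt_fromBlocks_sumElim_zero_left :
    pairInt (fromBlocks A 0 0 B) (Sum.elim α β) (Sum.elim 0 β') ↔ pairInt B β β' := by
  rw [pairInt_fromBlocks_sumElim_iff, pairInt_iff_dotProduct]
  simp

lemma exists_split_mem_Vset_transpose (hp : IsCharge A p) (hp' : IsCharge Aᵀ p')
    (hq : IsCharge B q) (hq' : IsCharge Bᵀ q') {d e : ℕ} (hde : Nat.Coprime d e)
    (hd : ∀ i, intQ (2 * d * p i)) (he : ∀ i, intQ (2 * e * q i))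
    (hp_half : intQ (1 / 2 + ∑ i, p i)) (hq_half : intQ (1 / 2 + ∑ i, q i))
    {u : ι ⊕ κ → ℚ} (hu : u ∈ Vset (fromBlocks A 0 0 B)ᵀ) :
    ∃ α ∈ Vset Aᵀ, ∃ β ∈ Vset Bᵀ, u - Sum.elim α β ∈ Nset (Sum.elim p' q') := by
  obtain ⟨α, β, rfl⟩ : ∃ α β, u = Sum.elim α β := ⟨_, _, (Sum.elim_comp_inl_inr u).symm⟩
  rw [transpose_fromBlocks_diagonal, sumElim_mem_Vset_fromBlocks_iff] at hu
  obtain ⟨hα, hβ, hαβ⟩ := hu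
  obtain ⟨k, hk⟩ : intQ (2 * ∑ i, α i) :=
    intQ_two_mul_of_coprime hde (hp.intQ_mul_sum hd hα) (hq.intQ_mul_sum he hβ) hαβ
  have hα_sum : intQ (∑ i, α i - k * ∑ i, p' i) := by
    convert (intQ_intCast k).sub ((intQ_intCast k).mul hp_half) using 1
    rw [hp.sum_eq_sum_of_transpose hp']
    linear_combination hk / 2
  have hβ_sum : intQ (∑ i, β i - k * ∑ i, q' i) := by
    convert hαβ.sub ((intQ_intCast k).mul hq_half) using 1
    rw [hq.sum_eq_sum_of_transpose hq']
    linear_combination -hk / 2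
  refine ⟨_, hp'.sub_smul_mem_Vset hα hα_sum, _, hq'.sub_smul_mem_Vset hβ hβ_sum, ?_⟩
  convert intCast_smul_mem_Nset k (Sum.elim p' q') using 1
  ext (i | i) <;> simp

/-- Representatives of the classes of `Vset C` modulo the charge vector `r` which contain a split
vector `(α, β)` with `α ∈ G` and `β ∈ H`. -/
def blockReps (r : ι ⊕ κ → ℚ) (C : Matrix (ι ⊕ κ) (ι ⊕ κ) ℕ) (G : Set (ι → ℚ))
    (H : Set (κ → ℚ)) : Set (ι ⊕ κ → ℚ) :=
  {v | v ∈ Vset C ∧ ∃ α ∈ G, ∃ β ∈ H, v - Sum.elim α β ∈ Nset r}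

lemma sumElim_mem_blockReps {G : Set (ι → ℚ)} {H : Set (κ → ℚ)} (r : ι ⊕ κ → ℚ)
    (hG : G ⊆ Vset A) (hH : H ⊆ Vset B) (hα : α ∈ G) (hβ : β ∈ H) :
    Sum.elim α β ∈ blockReps r (fromBlocks A 0 0 B) G H :=
  ⟨sumElim_mem_Vset_fromBlocks (hG hα) (hH hβ), α, hα, β, hβ, by
    rw [sub_self]; exact zero_mem_Nset r⟩

lemma blockReps_Tset_subset_Tset (hp : IsCharge A p) (hp' : IsCharge Aᵀ p')
    (hq : IsCharge B q) (hq' : IsCharge Bᵀ q') {G : Set (ι → ℚ)} {H : Set (κ → ℚ)}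
    (hG : G ⊆ Vset A) (hH : H ⊆ Vset B) :
    blockReps (Sum.elim p' q') (fromBlocks A 0 0 B)ᵀ (Tset A G) (Tset B H) ⊆
      Tset (fromBlocks A 0 0 B) (blockReps (Sum.elim p q) (fromBlocks A 0 0 B) G H) := by
  rintro u ⟨hu, α, hα, β, hβ, hu_sub⟩
  refine ⟨hu, ?_⟩
  rintro v ⟨-, α', hα', β', hβ', hv_sub⟩
  have hr' : IsCharge (fromBlocks A 0 0 B)ᵀ (Sum.elim p' q') := by
    rw [transpose_fromBlocks_diagonal]; exact hp'.fromBlocks hq'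
  rw [(hp.fromBlocks hq).pairInt_congr_right hu hv_sub,
    hr'.pairInt_congr_left (sumElim_mem_Vset_fromBlocks (hG hα') (hH hβ')) hu_sub]
  exact pairInt_fromBlocks_sumElim (hα.2 α' hα') (hβ.2 β' hβ')

lemma Tset_subset_blockReps_Tset (hp : IsCharge A p) (hp' : IsCharge Aᵀ p')
    (hq : IsCharge B q) (hq' : IsCharge Bᵀ q') {d e : ℕ} (hde : Nat.Coprime d e)
    (hd : ∀ i, intQ (2 * d * p i)) (he : ∀ i, intQ (2 * e * q i))
    (hp_half : intQ (1 / 2 + ∑ i, p i)) (hq_half : intQ (1 / 2 + ∑ i, q i))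
    {G : Set (ι → ℚ)} {H : Set (κ → ℚ)} (hG : G ⊆ Vset A) (hH : H ⊆ Vset B)
    (hG_zero : 0 ∈ G) (hH_zero : 0 ∈ H) (r : ι ⊕ κ → ℚ) :
    Tset (fromBlocks A 0 0 B) (blockReps r (fromBlocks A 0 0 B) G H) ⊆
      blockReps (Sum.elim p' q') (fromBlocks A 0 0 B)ᵀ (Tset A G) (Tset B H) := by
  rintro u ⟨hu, hu_pair⟩
  obtain ⟨α, hα, β, hβ, hu_sub⟩ :=
    exists_split_mem_Vset_transpose hp hp' hq hq' hde hd he hp_half hq_half hu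
  have hr' : IsCharge (fromBlocks A 0 0 B)ᵀ (Sum.elim p' q') := by
    rw [transpose_fromBlocks_diagonal]; exact hp'.fromBlocks hq'
  have hαβ_pair : ∀ α' ∈ G, ∀ β' ∈ H,
      pairInt (fromBlocks A 0 0 B) (Sum.elim α β) (Sum.elim α' β') := fun α' hα' β' hβ' =>
    (hr'.pairInt_congr_left (sumElim_mem_Vset_fromBlocks (hG hα') (hH hβ')) hu_sub).1 <|
      hu_pair _ (sumElim_mem_blockReps r hG hH hα' hβ')
  refine ⟨hu, α, ⟨hα, fun α' hα' => ?_⟩, β, ⟨hβ, fun β' hβ' => ?_⟩, hu_sub⟩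
  · exact pairInt_fromBlocks_sumElim_zero_right.1 (hαβ_pair α' hα' 0 hH_zero)
  · exact pairInt_fromBlocks_sumElim_zero_left.1 (hαβ_pair 0 hG_zero β' hβ')

end Blocks

section AddSquare

variable {ι κ : Type*} {A : Matrix ι ι ℕ} {p : ι → ℚ}

/-- The exponent matrix `diag(2, A)` of `x₀² + f`, where `A` is that of `f`. -/
def addSquare (A : Matrix ι ι ℕ) : Matrix (Fin 1 ⊕ ι) (Fin 1 ⊕ ι) ℕ :=
  fromBlocks (of ![![2]]) 0 0 A

/-- The charges `(1/2, p)` of `x₀² + f`, where `p` are those of `f`. -/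
def squareCharge (p : ι → ℚ) : Fin 1 ⊕ ι → ℚ :=
  Sum.elim (fun _ => 1 / 2) p

lemma transpose_addSquare : (addSquare A)ᵀ = addSquare Aᵀ := by
  rw [addSquare, transpose_fromBlocks_diagonal, addSquare]
  congr 1
  ext i j
  rw [transpose_apply, Subsingleton.elim i j]

/-- The vectors `α` with `(0, α) ∈ H`; `θ̃⁻¹` sees `H` only through them. -/
def slice (H : Set (Fin 1 ⊕ ι → ℚ)) : Set (ι → ℚ) :=
  {α | Sum.elim (0 : Fin 1 → ℚ) α ∈ H}

variable [Fintype ι] [Fintype κ]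

/-- `H` is the set of representatives in `ℚⁿ` of a subset containing `0` of
`{v ∈ ℚⁿ/ℤⁿ : Av ∈ ℤⁿ, Σᵢ vᵢ ∈ ℤ}/⟨p⟩`. -/
structure IsPointedRepSet (A : Matrix ι ι ℕ) (p : ι → ℚ) (H : Set (ι → ℚ)) : Prop where
  subset_Vset : H ⊆ Vset A
  zero_mem : 0 ∈ H
  add_mem : ∀ v ∈ H, ∀ n ∈ Nset p, v + n ∈ H

lemma IsCharge.addSquare (hp : IsCharge A p) : IsCharge (addSquare A) (squareCharge p) := by
  refine IsCharge.fromBlocks ?_ hp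
  ext i
  simp [mulVec, dotProduct]

lemma sumElim_zero_mem_Vset_addSquare_iff {α : ι → ℚ} :
    Sum.elim (0 : Fin 1 → ℚ) α ∈ Vset (addSquare A) ↔ α ∈ Vset A := by
  rw [addSquare, sumElim_mem_Vset_fromBlocks_iff, mem_Vset_iff]
  simp [intQ_zero]

lemma exists_sub_smul_squareCharge_eq_sumElim_zero {v : Fin 1 ⊕ ι → ℚ} (hv : v ∈ Vset (addSquare A))
    (p : ι → ℚ) :
    ∃ (k : ℤ) (β : ι → ℚ), v - (k : ℚ) • squareCharge p = Sum.elim (0 : Fin 1 → ℚ) β := by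
  obtain ⟨k, hk⟩ : intQ (2 * v (Sum.inl 0)) := by
    simpa [addSquare] using hv.1 (Sum.inl 0)
  refine ⟨k, fun i => v (Sum.inr i) - k * p i, ?_⟩
  ext (i | i)
  · simp only [squareCharge, Pi.sub_apply, Pi.smul_apply, Sum.elim_inl, smul_eq_mul,
      Pi.zero_apply, Subsingleton.elim i 0]
    linear_combination hk / 2
  · simp [squareCharge]

namespace IsPointedRepSet

variable {H : Set (Fin 1 ⊕ ι → ℚ)}

lemma intQ_half_add_sum (hH : IsPointedRepSet (addSquare A) (squareCharge p) H) :
    intQ (1 / 2 + ∑ i, p i) := by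
  have charge_mem : squareCharge p ∈ H := by
    simpa using hH.add_mem 0 hH.zero_mem _ (intCast_smul_mem_Nset 1 (squareCharge p))
  simpa [squareCharge] using (hH.subset_Vset charge_mem).2

lemma slice_subset_Vset (hH : IsPointedRepSet (addSquare A) (squareCharge p) H) :
    slice H ⊆ Vset A :=
  fun _ hα => sumElim_zero_mem_Vset_addSquare_iff.1 (hH.subset_Vset hα)

lemma zero_mem_slice (hH : IsPointedRepSet (addSquare A) (squareCharge p) H) :
    0 ∈ slice H := by
  simpa [slice] using hH.zero_mem

lemma slice_Tset_addSquare (hH : IsPointedRepSet (addSquare A) (squareCharge p) H)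
    (hp : IsCharge A p) :
    slice (Tset (addSquare A) H) = Tset A (slice H) := by
  ext α
  constructor
  · rintro ⟨hα, hα_pair⟩
    rw [transpose_addSquare, sumElim_zero_mem_Vset_addSquare_iff] at hα
    exact ⟨hα, fun β hβ => pairInt_fromBlocks_sumElim_zero_left.1 (hα_pair _ hβ)⟩
  · rintro ⟨hα, hα_pair⟩
    have hα_square : Sum.elim (0 : Fin 1 → ℚ) α ∈ Vset (addSquare A)ᵀ := by
      rwa [transpose_addSquare, sumElim_zero_mem_Vset_addSquare_iff]
    refine ⟨hα_square, fun v hv => ?_⟩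
    obtain ⟨k, β, hβ⟩ := exists_sub_smul_squareCharge_eq_sumElim_zero (hH.subset_Vset hv) p
    have hβ_mem : Sum.elim (0 : Fin 1 → ℚ) β ∈ H := by
      rw [← hβ, sub_eq_add_neg, ← neg_smul, ← Int.cast_neg]
      exact hH.add_mem v hv _ (intCast_smul_mem_Nset (-k) _)
    have hv_sub : v - Sum.elim (0 : Fin 1 → ℚ) β ∈ Nset (squareCharge p) := by
      rw [← hβ, sub_sub_cancel]
      exact intCast_smul_mem_Nset k _
    rw [hp.addSquare.pairInt_congr_right hα_square hv_sub]
    exact pairInt_fromBlocks_sumElim_zero_left.2 (hα_pair β hβ_mem)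

end IsPointedRepSet

/-- The preimage of `G × H` under `θ̃` for blocks of arbitrary size, with charge vector `r` and
exponent matrix `C`; `pullSet` is the case of blocks of sizes `2` and `3`. -/
def thetaPreimage (r : ι ⊕ κ → ℚ) (C : Matrix (ι ⊕ κ) (ι ⊕ κ) ℕ) (G : Set (Fin 1 ⊕ ι → ℚ))
    (H : Set (Fin 1 ⊕ κ → ℚ)) : Set (ι ⊕ κ → ℚ) :=
  {v | v ∈ Vset C ∧ ∃ v' : ι ⊕ κ → ℚ, v - v' ∈ Nset r ∧
    intQ (∑ i, v' (Sum.inl i)) ∧ intQ (∑ j, v' (Sum.inr j)) ∧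
    v' ∘ Sum.inl ∈ slice G ∧ v' ∘ Sum.inr ∈ slice H}

lemma thetaPreimage_eq_blockReps (r : ι ⊕ κ → ℚ) (C : Matrix (ι ⊕ κ) (ι ⊕ κ) ℕ)
    {G : Set (Fin 1 ⊕ ι → ℚ)} {H : Set (Fin 1 ⊕ κ → ℚ)}
    (hG : ∀ v ∈ G, intQ (∑ i, v i)) (hH : ∀ v ∈ H, intQ (∑ i, v i)) :
    thetaPreimage r C G H = blockReps r C (slice G) (slice H) := by
  ext v
  refine and_congr_right fun _ => ⟨?_, ?_⟩
  · rintro ⟨v', hv', -, -, hα, hβ⟩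
    exact ⟨_, hα, _, hβ, by rwa [Sum.elim_comp_inl_inr]⟩
  · rintro ⟨α, hα, β, hβ, hv⟩
    exact ⟨Sum.elim α β, hv, by simpa using hG _ hα, by simpa using hH _ hβ, hα, hβ⟩

end AddSquare

section Charges

variable {ι : Type*} {A : Matrix ι ι ℕ} {d : ℕ} {w : ι → ℕ}

/-- The charges `wᵢ / 2d` of a polynomial of weighted degree `2d` in variables of weights `wᵢ`. -/
def weightCharge (d : ℕ) (w : ι → ℕ) : ι → ℚ :=
  fun i => w i / (2 * d)

lemma intQ_mul_weightCharge (hd : 0 < d) (i : ι) : intQ (2 * d * weightCharge d w i) := by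
  rw [weightCharge, mul_div_cancel₀ _ (by positivity)]
  exact intQ_natCast _

lemma isCharge_weightCharge [Fintype ι] (hd : 0 < d) (hA : ∀ i, ∑ j, A i j * w j = 2 * d) :
    IsCharge A (weightCharge d w) := by
  ext i
  have hAi : ∑ j, (A i j : ℚ) * w j = 2 * d := by exact_mod_cast hA i
  simp only [mulVec, dotProduct, map_apply, weightCharge, ← mul_div_assoc, ← Finset.sum_div, hAi,
    Pi.one_apply]
  exact div_self (by positivity)

lemma qE3_eq_squareCharge {u0 : ℕ} (h : 0 < u0) (u1 u2 : ℕ) :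
    qE3 u0 u1 u2 = squareCharge (weightCharge u0 ![u1, u2]) := by
  ext (i | i)
  · simp only [qE3, squareCharge, Sum.elim_inl]
    field_simp
  · fin_cases i <;> simp [qE3, squareCharge, weightCharge]

lemma qS4_eq_squareCharge {v0 : ℕ} (h : 0 < v0) (v1 v2 v3 : ℕ) :
    qS4 v0 v1 v2 v3 = squareCharge (weightCharge v0 ![v1, v2, v3]) := by
  ext (i | i)
  · simp only [qS4, squareCharge, Sum.elim_inl]
    field_simp
  · fin_cases i <;> simp [qS4, squareCharge, weightCharge]

lemma qES5_eq_sumElim {u0 v0 : ℕ} (hu : 0 < u0) (hv : 0 < v0) (u1 u2 v1 v2 v3 : ℕ) :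
    qES5 u0 u1 u2 v0 v1 v2 v3 =
      Sum.elim (weightCharge u0 ![u1, u2]) (weightCharge v0 ![v1, v2, v3]) := by
  ext (i | i) <;>
  · simp only [qES5, weightCharge, Sum.elim_inl, Sum.elim_inr, Nat.cast_mul]
    field_simp

end Charges

end BV

open BV in
theorem transposed_group_of_pullback_general {ι κ : Type*} [Fintype ι] [Fintype κ]
    {A : Matrix ι ι ℕ} {B : Matrix κ κ ℕ} {p p' : ι → ℚ} {q q' : κ → ℚ}
    (hp : IsCharge A p) (hp' : IsCharge Aᵀ p') (hq : IsCharge B q) (hq' : IsCharge Bᵀ q')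
    {d e : ℕ} (hde : Nat.Coprime d e)
    (hd : ∀ i, intQ (2 * d * p i)) (he : ∀ i, intQ (2 * e * q i))
    {G : Set (Fin 1 ⊕ ι → ℚ)} {H : Set (Fin 1 ⊕ κ → ℚ)}
    (hG : IsPointedRepSet (addSquare A) (squareCharge p) G)
    (hH : IsPointedRepSet (addSquare B) (squareCharge q) H) :
    Tset (fromBlocks A 0 0 B) (thetaPreimage (Sum.elim p q) (fromBlocks A 0 0 B) G H) =
      thetaPreimage (Sum.elim p' q') (fromBlocks A 0 0 B)ᵀ
        (Tset (addSquare A) G) (Tset (addSquare B) H) := by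
  rw [thetaPreimage_eq_blockReps _ _ (fun _ hv => (hG.subset_Vset hv).2)
      (fun _ hv => (hH.subset_Vset hv).2),
    thetaPreimage_eq_blockReps _ _ (fun _ hv => hv.1.2) (fun _ hv => hv.1.2),
    hG.slice_Tset_addSquare hp, hH.slice_Tset_addSquare hq]
  exact Set.Subset.antisymm
    (Tset_subset_blockReps_Tset hp hp' hq hq' hde hd he hG.intQ_half_add_sum hH.intQ_half_add_sum
      hG.slice_subset_Vset hH.slice_subset_Vset hG.zero_mem_slice hH.zero_mem_slice _)
    (blockReps_Tset_subset_Tset hp hp' hq hq' hG.slice_subset_Vset hH.slice_subset_Vset)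

/-- under the standing assumptions, identifying `S̃L(W)` with
`{v ∈ A⁻¹ℤⁿ/ℤⁿ : Σᵢ vᵢ ∈ ℤ}/⟨q⟩` for `W_{E,S}`, `W_E`, `W_S` and their transposes, for all
subgroups `G_E ⊆ S̃L(W_E)` and `G_S ⊆ S̃L(W_S)` (given by sets of representatives `HE`, `HS`),
setting `G_{E,S} := θ̃⁻¹(G_E × G_S)`, one has `θ̃^⊤(G_{E,S}^⊤) = G_E^⊤ × G_S^⊤`, i.e.
`G_{E,S}^⊤` coincides with `(θ̃^⊤)⁻¹(G_E^⊤ × G_S^⊤)`. -/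
theorem transposed_group_of_pullback
    (AhE : Matrix (Fin 2) (Fin 2) ℕ) (AhS : Matrix (Fin 3) (Fin 3) ℕ)
    (u0 u1 u2 v0 v1 v2 v3 : ℕ)
    (hEdet : IsUnit ((AhE.map (Nat.cast : ℕ → ℚ)).det))
    (hSdet : IsUnit ((AhS.map (Nat.cast : ℕ → ℚ)).det))
    (hEnd : BV.NonDeg (BV.WEpoly AhE))
    (hSnd : BV.NonDeg (BV.WSpoly AhS))
    (hupos : 0 < u0 ∧ 0 < u1 ∧ 0 < u2)
    (hvpos : 0 < v0 ∧ 0 < v1 ∧ 0 < v2 ∧ 0 < v3)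
    (hEhom : ∀ i, ∑ j, AhE i j * ![u1, u2] j = 2 * u0)
    (hShom : ∀ i, ∑ j, AhS i j * ![v1, v2, v3] j = 2 * v0)
    (hEnorm : Nat.gcd u1 u2 = 1 ∧ Nat.gcd u0 u2 = 1 ∧ Nat.gcd u0 u1 = 1)
    (hSnorm : Nat.gcd (Nat.gcd v1 v2) v3 = 1 ∧ Nat.gcd (Nat.gcd v0 v2) v3 = 1 ∧
      Nat.gcd (Nat.gcd v0 v1) v3 = 1 ∧ Nat.gcd (Nat.gcd v0 v1) v2 = 1)
    (hco : Nat.Coprime u0 v0)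
    (u0T u1T u2T v0T v1T v2T v3T : ℕ)
    (hETpos : 0 < u0T ∧ 0 < u1T ∧ 0 < u2T)
    (hSTpos : 0 < v0T ∧ 0 < v1T ∧ 0 < v2T ∧ 0 < v3T)
    (hEThom : ∀ i, ∑ j, AhE j i * ![u1T, u2T] j = 2 * u0T)
    (hSThom : ∀ i, ∑ j, AhS j i * ![v1T, v2T, v3T] j = 2 * v0T)
    (hETmin : ∀ (D w0 : ℕ) (wa : Fin 2 → ℕ), 0 < D → D = 2 * w0 →
      (∀ i, ∑ j, AhE j i * wa j = D) → 2 * u0T ≤ D)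
    (hSTmin : ∀ (D w0 : ℕ) (wb : Fin 3 → ℕ), 0 < D → D = 2 * w0 →
      (∀ i, ∑ j, AhS j i * wb j = D) → 2 * v0T ≤ D)
    (hcoT : Nat.Coprime u0T v0T)
    (HE : Set ((Fin 1 ⊕ Fin 2) → ℚ)) (HS : Set ((Fin 1 ⊕ Fin 3) → ℚ))
    (hHE1 : HE ⊆ BV.Vset (BV.AEfull AhE))
    (hHE2 : BV.Nset (BV.qE3 u0 u1 u2) ⊆ HE)
    (hHE3 : ∀ a ∈ HE, ∀ b ∈ HE, a + b ∈ HE)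
    (hHE4 : ∀ a ∈ HE, -a ∈ HE)
    (hHS1 : HS ⊆ BV.Vset (BV.ASfull AhS))
    (hHS2 : BV.Nset (BV.qS4 v0 v1 v2 v3) ⊆ HS)
    (hHS3 : ∀ a ∈ HS, ∀ b ∈ HS, a + b ∈ HS)
    (hHS4 : ∀ a ∈ HS, -a ∈ HS)
    :
    BV.Tset (BV.AES AhE AhS)
        (BV.pullSet (BV.qES5 u0 u1 u2 v0 v1 v2 v3) (BV.AES AhE AhS) HE HS)
      = BV.pullSet (BV.qES5 u0T u1T u2T v0T v1T v2T v3T) ((BV.AES AhE AhS)ᵀ)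
          (BV.Tset (BV.AEfull AhE) HE) (BV.Tset (BV.ASfull AhS) HS) := by
  rw [BV.qE3_eq_squareCharge hupos.1] at hHE2
  rw [BV.qS4_eq_squareCharge hvpos.1] at hHS2
  rw [BV.qES5_eq_sumElim hupos.1 hvpos.1, BV.qES5_eq_sumElim hETpos.1 hSTpos.1]
  exact transposed_group_of_pullback_general
    (BV.isCharge_weightCharge hupos.1 hEhom) (BV.isCharge_weightCharge hETpos.1 hEThom)
    (BV.isCharge_weightCharge hvpos.1 hShom) (BV.isCharge_weightCharge hSTpos.1 hSThom)
    hco (BV.intQ_mul_weightCharge hupos.1) (BV.intQ_mul_weightCharge hvpos.1)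
    ⟨hHE1, hHE2 (BV.zero_mem_Nset _), fun v hv n hn => hHE3 v hv n (hHE2 hn)⟩
    ⟨hHS1, hHS2 (BV.zero_mem_Nset _), fun v hv n hn => hHS3 v hv n (hHS2 hn)⟩
end
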